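/- arXiv:2507.16133 — 2 statements merged into one kernel-verified Lean document; each statement's English description precedes it below -/
import Mathlib

section
/- Let n ≥ 2 and let Λ be an n-dimensional isotropic subspace of ℂ^{2n+1}. Then the convex hull 𝒳(Λ) in ℝⁿ of the vectors χ(S') for S' ∈ 𝒟(Λ) is contained in the polytope 𝒫(Λ). -/
/-!
The polytope is an intersection of half-spaces, hence convex, so it suffices to check the
inequalities at the vertices `χ(S')`, `S' ∈ 𝒟(Λ)`. As `S'` contains exactly one of `q, q̄` for every
`q`, one has `χ(S')(S) = |S ∩ S'| - |S ∩ [n]̄|` (`xval_chi`), and the claim becomes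
`|S ∩ S'| ≤ rk_Λ(S)` (`card_inter_le_rkF`). Since `Λ ∩ H_{S'} = 0`, a vector of `Λ ∩ H_S` is
determined by its coordinates in `S' \ S`, so `dim (Λ ∩ H_S) ≤ |S' \ S| = n - |S ∩ S'|`.
-/

open scoped BigOperators

/-- Index set for the coordinates of `ℂ^{2n+1}`: `none` is the coordinate `0`,
`some (q, false)` is the coordinate `q+1 ∈ [n]`, and `some (q, true)` is the barred
coordinate `(q+1)̄ ∈ [n]̄`. -/
abbrev Idx (n : ℕ) := Option (Fin n × Bool)

/-- The nondegenerate symmetric bilinear form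
`y·z = 2 y₀ z₀ + Σ_q (y_q z_{q̄} + y_{q̄} z_q)` on `ℂ^{2n+1}`. -/
noncomputable def bform (n : ℕ) (y z : Idx n → ℂ) : ℂ :=
  2 * y none * z none +
    ∑ q : Fin n, (y (some (q, false)) * z (some (q, true)) +
      y (some (q, true)) * z (some (q, false)))

/-- A subspace is isotropic if the bilinear form vanishes identically on it. -/
def IsIsotropic (n : ℕ) (Λ : Submodule ℂ (Idx n → ℂ)) : Prop :=
  ∀ y ∈ Λ, ∀ z ∈ Λ, bform n y z = 0

/-- `H_S`: the coordinate subspace of vectors whose coordinates indexed by `S` vanish. -/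
noncomputable def coordSub (n : ℕ) (S : Set (Idx n)) : Submodule ℂ (Idx n → ℂ) where
  carrier := {v | ∀ i ∈ S, v i = 0}
  add_mem' := by
    intro a b ha hb i hi
    simp only [Pi.add_apply, ha i hi, hb i hi, add_zero]
  zero_mem' := by intro i hi; rfl
  smul_mem' := by
    intro c a ha i hi
    simp only [Pi.smul_apply, ha i hi, smul_zero]

/-- `rk_Λ(S) = n − dim(Λ ∩ H_S)`. -/
noncomputable def rk (n : ℕ) (Λ : Submodule ℂ (Idx n → ℂ)) (S : Set (Idx n)) : ℕ :=
  n - Module.finrank ℂ ↥(Λ ⊓ coordSub n S)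

/-- The set of coordinates in `[n] ∪ [n]̄` corresponding to a finite set of pairs. -/
def finIdx (n : ℕ) (S : Finset (Fin n × Bool)) : Set (Idx n) :=
  (fun p => (some p : Idx n)) '' ↑S

/-- A subset `S ⊆ [n] ∪ [n]̄` is admissible if it contains no pair `{q, q̄}`. -/
def Admissible (n : ℕ) (S : Finset (Fin n × Bool)) : Prop :=
  ∀ q : Fin n, ¬((q, false) ∈ S ∧ (q, true) ∈ S)

/-- `rk_Λ(S)` for `S ⊆ [n] ∪ [n]̄`. -/
noncomputable def rkF (n : ℕ) (Λ : Submodule ℂ (Idx n → ℂ)) (S : Finset (Fin n × Bool)) : ℕ :=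
  rk n Λ (finIdx n S)

/-- `g_Λ(S) = rk_Λ(S) − |S ∩ [n]̄|`. -/
noncomputable def gF (n : ℕ) (Λ : Submodule ℂ (Idx n → ℂ)) (S : Finset (Fin n × Bool)) : ℤ :=
  (rkF n Λ S : ℤ) - ((S.filter fun p => p.2 = true).card : ℤ)

/-- The delta-matroid `𝒟(Λ)`: maximal admissible subsets of full rank. -/
def deltaMatroid (n : ℕ) (Λ : Submodule ℂ (Idx n → ℂ)) : Set (Finset (Fin n × Bool)) :=
  {S | Admissible n S ∧ S.card = n ∧ rkF n Λ S = n}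

/-- `x(S) = Σ_{q ∈ S ∩ [n]} x_q − Σ_{q̄ ∈ S ∩ [n]̄} x_q`. -/
def xval (n : ℕ) (x : Fin n → ℝ) (S : Finset (Fin n × Bool)) : ℝ :=
  ∑ p ∈ S.filter (fun p => p.2 = false), x p.1 -
    ∑ p ∈ S.filter (fun p => p.2 = true), x p.1

/-- The polytope `𝒫(Λ)` cut out by the inequalities `x(S) ≤ g_Λ(S)` over admissible `S`. -/
def polytopeP (n : ℕ) (Λ : Submodule ℂ (Idx n → ℂ)) : Set (Fin n → ℝ) :=
  {x | ∀ S : Finset (Fin n × Bool), Admissible n S → xval n x S ≤ (gF n Λ S : ℝ)}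

/-- `χ(S')`: the 0–1 vector whose `q`-th coordinate is `1` exactly when `q ∈ S' ∩ [n]`. -/
def chi (n : ℕ) (S : Finset (Fin n × Bool)) : Fin n → ℝ :=
  fun q => if (q, false) ∈ S then 1 else 0

/-- `S₁ ⊔ S₂ = {a ∈ S₁ ∪ S₂ : ā ∉ S₁ ∪ S₂}`. -/
def sqcup (n : ℕ) (S₁ S₂ : Finset (Fin n × Bool)) : Finset (Fin n × Bool) :=
  (S₁ ∪ S₂).filter (fun p => (p.1, !p.2) ∉ S₁ ∪ S₂)

lemma mem_coordSub_finIdx {n : ℕ} {S : Finset (Fin n × Bool)} {v : Idx n → ℂ} :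
    v ∈ coordSub n (finIdx n S) ↔ ∀ p ∈ S, v (some p) = 0 := by
  change (∀ i ∈ finIdx n S, v i = 0) ↔ _
  exact Set.forall_mem_image

/-- A maximal admissible set contains exactly one of `q` and `q̄`. -/
lemma mem_true_iff_of_maximal {n : ℕ} {T : Finset (Fin n × Bool)} (hT : Admissible n T)
    (hc : T.card = n) (q : Fin n) : (q, true) ∈ T ↔ (q, false) ∉ T := by
  refine ⟨fun h h' => hT q ⟨h', h⟩, fun h => ?_⟩
  have hinj : Set.InjOn Prod.fst (T : Set (Fin n × Bool)) := by
    rintro ⟨a, b⟩ ha ⟨c, d⟩ hd (rfl : a = c)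
    have := hT a
    cases b <;> cases d <;> simp_all
  have himg : T.image Prod.fst = Finset.univ := by
    rw [← Finset.card_eq_iff_eq_univ, Finset.card_image_of_injOn hinj, hc, Fintype.card_fin]
  obtain ⟨⟨a, b⟩, hab, rfl⟩ := Finset.mem_image.1 (himg ▸ Finset.mem_univ q)
  cases b
  · exact absurd hab h
  · exact hab

lemma card_inter_le_rkF {n : ℕ} (hn : 0 < n) {Λ : Submodule ℂ (Idx n → ℂ)}
    {T : Finset (Fin n × Bool)} (hT : T ∈ deltaMatroid n Λ) (S : Finset (Fin n × Bool)) :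
    (S ∩ T).card ≤ rkF n Λ S := by
  obtain ⟨-, hc, hr⟩ := hT
  have hbot : Λ ⊓ coordSub n (finIdx n T) = ⊥ := by
    rw [← Submodule.finrank_eq_zero (R := ℂ)]
    unfold rkF rk at hr
    omega
  let f : ↥(Λ ⊓ coordSub n (finIdx n S)) →ₗ[ℂ] (↥(T \ S) → ℂ) :=
    (LinearMap.funLeft ℂ ℂ (fun p : ↥(T \ S) => (some p.1 : Idx n))).comp (Submodule.subtype _)
  have hf : Function.Injective f := by
    rw [← LinearMap.ker_eq_bot, LinearMap.ker_eq_bot']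
    rintro ⟨v, hv⟩ h0
    obtain ⟨hvΛ, hvS⟩ := Submodule.mem_inf.1 hv
    rw [mem_coordSub_finIdx] at hvS
    have hvT : v ∈ Λ ⊓ coordSub n (finIdx n T) := by
      refine Submodule.mem_inf.2 ⟨hvΛ, mem_coordSub_finIdx.2 fun p hp => ?_⟩
      by_cases hpS : p ∈ S
      · exact hvS p hpS
      · exact congrFun h0 ⟨p, Finset.mem_sdiff.2 ⟨hp, hpS⟩⟩
    rw [hbot, Submodule.mem_bot] at hvT
    exact Subtype.ext hvT
  have hle := LinearMap.finrank_le_finrank_of_injective hf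
  rw [Module.finrank_fintype_fun_eq_card, Fintype.card_coe] at hle
  have hcard := Finset.card_sdiff_add_card_inter T S
  rw [Finset.inter_comm] at hcard
  unfold rkF rk
  omega

lemma xval_chi {n : ℕ} {T : Finset (Fin n × Bool)} (hT : Admissible n T)
    (hc : T.card = n) (S : Finset (Fin n × Bool)) :
    xval n (chi n T) S
      = ((S ∩ T).card : ℝ) - ((S.filter fun p => p.2 = true).card : ℝ) := by
  have h : ((S ∩ T).card : ℝ) = ∑ p ∈ S, if p ∈ T then (1 : ℝ) else 0 := by
    rw [Finset.sum_boole, Finset.filter_mem_eq_inter]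
  have h1 : ((S.filter fun p => p.2 = true).card : ℝ)
      = ∑ p ∈ S, if p.2 = true then (1 : ℝ) else 0 := by
    rw [Finset.sum_boole]
  rw [h, h1]
  unfold xval
  rw [Finset.sum_filter, Finset.sum_filter, ← Finset.sum_sub_distrib, ← Finset.sum_sub_distrib]
  refine Finset.sum_congr rfl ?_
  rintro ⟨q, b⟩ -
  have := mem_true_iff_of_maximal hT hc q
  cases b
  · simp [chi]
  · by_cases hq : (q, false) ∈ T <;> simp [chi, this, hq]

lemma convex_polytopeP (n : ℕ) (Λ : Submodule ℂ (Idx n → ℂ)) : Convex ℝ (polytopeP n Λ) := by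
  intro x hx y hy a b ha hb hab S hS
  have hlin : xval n (a • x + b • y) S = a * xval n x S + b * xval n y S := by
    simp only [xval, Pi.add_apply, Pi.smul_apply, smul_eq_mul, Finset.sum_add_distrib,
      ← Finset.mul_sum]
    ring
  rw [hlin]
  calc a * xval n x S + b * xval n y S
      ≤ a * (gF n Λ S : ℝ) + b * (gF n Λ S : ℝ) := by
        gcongr
        · exact hx S hS
        · exact hy S hS
    _ = (gF n Λ S : ℝ) := by rw [← add_mul, hab, one_mul]

theorem stmt7 (n : ℕ) (hn : 2 ≤ n)
    (Λ : Submodule ℂ (Idx n → ℂ)) (hiso : IsIsotropic n Λ)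
    (hΛ : Module.finrank ℂ ↥Λ = n) :
    convexHull ℝ (chi n '' deltaMatroid n Λ) ⊆ polytopeP n Λ := by
  refine convexHull_min ?_ (convex_polytopeP n Λ)
  rintro _ ⟨T, hT, rfl⟩ S -
  have hle : ((S ∩ T).card : ℝ) ≤ (rkF n Λ S : ℝ) := by
    exact_mod_cast card_inter_le_rkF (by omega) hT S
  rw [xval_chi hT.1 hT.2.1 S, gF]
  push_cast
  linarith
end

section
/- Let n ≥ 2, let Λ be an n-dimensional isotropic subspace of ℂ^{2n+1}, and let x be a vertex (extreme point) of the polytope 𝒫(Λ). Then there exists a chain of admissible subsets S₁ ⊂ S₂ ⊂ ⋯ ⊂ S_n ⊆ [n] ∪ [n]̄ with |S_j| = j for each j, such that x(S_j) = g_Λ(S_j) for every j = 1,…,n. -/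
/-!
Write `f(S) = dim (Λ ∩ H_S)`, so that `rk(S) = n - f(S)`. The function `g_Λ` is bisubmodular:
`g(S ∩ T) + g(S ⊔ T) ≤ g(S) + g(T)` for admissible `S`, `T` (`gF_bisubmodular`). Ordinary
submodularity of `rk` compares `S`, `T` with `S ∩ T`, `S ∪ T`. Passing from `S ∪ T` to `S ⊔ T`
removes a set `C` of pairs `{q, q̄}`, and the rank drops by at least `|C| / 2`
(`two_mul_finrank_add_le`): this is where isotropy enters, through the inequality
`dim X + dim Y ≤ 2n + 1` for orthogonal subspaces `X`, `Y`.

Since `x ↦ x(S)` is modular for `(∩, ⊔)`, the family of tight admissible sets is closed under `∩`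
and `⊔`. As `x` is an extreme point, a direction `d` with `d(S) = 0` for all tight `S` is zero
(`direction_eq_zero`). Let `T` be a tight set of largest cardinality. Every tight `S` is supported
on the support of `T`, since `T ⊔ (S ⊔ T)` is tight and contains `T`; hence the support of `T` is
all of `[n]`. Moreover `d(S) = d(S ∩ T) - d(T) + d(S ⊔ T)` for every tight `S`, so already the
tight subsets of `T` detect all directions, and in particular they separate the points of `T`.
They form a lattice of sets containing `∅` and `T`, and separation of points forces every maximal
chain of this lattice to grow by one element at a time.
-/


open scoped BigOperators

/-! ### Linear algebra of the form -/

/-- The involution `q ↔ q̄`, `0 ↔ 0` on coordinates. -/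
def barI (n : ℕ) (i : Idx n) : Idx n := i.map fun p => (p.1, !p.2)

theorem barI_barI (n : ℕ) (i : Idx n) : barI n (barI n i) = i := by
  rcases i with _ | ⟨q, b⟩ <;> simp [barI]

theorem bform_eq_zero (n : ℕ) (y z : Idx n → ℂ) (h : ∀ i, y i = 0 ∨ z (barI n i) = 0) :
    bform n y z = 0 := by
  have h0 : y none * z none = 0 := by
    have := h none
    simpa [barI] using this
  have h1 : ∀ q : Fin n, y (some (q, false)) * z (some (q, true)) = 0 := fun q => by
    have := h (some (q, false))
    simpa [barI] using this
  have h2 : ∀ q : Fin n, y (some (q, true)) * z (some (q, false)) = 0 := fun q => by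
    have := h (some (q, true))
    simpa [barI] using this
  simp [bform, h1, h2, mul_assoc, h0]

/-- `bform` as a bundled bilinear form. -/
noncomputable def bilin (n : ℕ) : LinearMap.BilinForm ℂ (Idx n → ℂ) :=
  LinearMap.mk₂ ℂ (bform n)
    (by
      intro a b c
      simp only [bform, Pi.add_apply, add_mul, Finset.sum_add_distrib]
      ring)
    (by
      intro c a b
      simp only [bform, Pi.smul_apply, smul_eq_mul, mul_add, Finset.mul_sum]
      congr 1
      · ring
      · exact Finset.sum_congr rfl fun q _ => by ring)
    (by
      intro a b c
      simp only [bform, Pi.add_apply, mul_add, Finset.sum_add_distrib]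
      ring)
    (by
      intro c a b
      simp only [bform, Pi.smul_apply, smul_eq_mul, mul_add, Finset.mul_sum]
      congr 1
      · ring
      · exact Finset.sum_congr rfl fun q _ => by ring)

theorem bilin_apply (n : ℕ) (y z : Idx n → ℂ) : bilin n y z = bform n y z := rfl

theorem bform_comm (n : ℕ) (y z : Idx n → ℂ) : bform n y z = bform n z y := by
  simp only [bform]
  congr 1
  · ring
  · exact Finset.sum_congr rfl fun q _ => by ring

theorem bilin_isSymm (n : ℕ) : (bilin n).IsSymm := ⟨fun y z => bform_comm n y z⟩

theorem bilin_nondegenerate (n : ℕ) : (bilin n).Nondegenerate := by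
  refine (bilin_isSymm n).isRefl.nondegenerate_iff_separatingLeft.2 ?_
  intro y hy
  funext i
  have := hy (Pi.single (barI n i) 1)
  rw [bilin_apply] at this
  rcases i with _ | ⟨q, b | b⟩
  · simpa [bform, barI, Pi.single_apply] using this
  · simpa [bform, barI, Pi.single_apply] using this
  · simpa [bform, barI, Pi.single_apply] using this

theorem finrank_add_le_of_ortho (n : ℕ) (X Y : Submodule ℂ (Idx n → ℂ))
    (h : ∀ a ∈ X, ∀ b ∈ Y, bform n a b = 0) :
    Module.finrank ℂ X + Module.finrank ℂ Y ≤ 2 * n + 1 := by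
  have h1 : Y ≤ (bilin n).orthogonal X := fun b hb a ha => h a ha b hb
  have h2 := LinearMap.BilinForm.finrank_orthogonal (bilin_nondegenerate n) X
  have h3 := Submodule.finrank_mono h1
  have h4 := Submodule.finrank_le X
  have h5 : Module.finrank ℂ (Idx n → ℂ) = 2 * n + 1 := by
    simp [Module.finrank_fintype_fun_eq_card]
    ring
  omega

theorem finrank_coordSub (n : ℕ) (A : Set (Idx n)) :
    Module.finrank ℂ (coordSub n A) = Aᶜ.ncard := by
  classical
  have h : coordSub n A = ⨅ i ∈ A, LinearMap.ker (LinearMap.proj i : (Idx n → ℂ) →ₗ[ℂ] ℂ) := by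
    ext v
    simp [coordSub, Submodule.mem_iInf]
  rw [h, (LinearMap.iInfKerProjEquiv ℂ (fun _ : Idx n => ℂ) (I := Aᶜ) (J := A)
    disjoint_compl_left (by simp)).finrank_eq, Module.finrank_fintype_fun_eq_card,
    Set.ncard_eq_toFinset_card', Set.toFinset_card]

theorem mem_coordSub (n : ℕ) (A : Set (Idx n)) (v : Idx n → ℂ) :
    v ∈ coordSub n A ↔ ∀ i ∈ A, v i = 0 := Iff.rfl

theorem ncard_add_ncard_compl (n : ℕ) (A : Set (Idx n)) : A.ncard + Aᶜ.ncard = 2 * n + 1 := by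
  rw [Set.ncard_add_ncard_compl A]
  simp
  ring

/-- If `U` contains no pair `{q, q̄}` and `C` is a bar-stable set disjoint from `U`, then imposing
the vanishing of the coordinates in `C` on `Λ ∩ H_U` lowers the dimension by at least `|C| / 2`, up
to rounding. With `E` the coordinate space on `Ū`, both dimensions are compared with
`dim (Λ ∩ E)`: the space `Λ + H_U` is orthogonal to `Λ ∩ E`, and the isotropic space
`(Λ ∩ H_{U ∪ C}) + E` is orthogonal to the coordinate space on `C`. -/
theorem two_mul_finrank_add_le (n : ℕ) (Λ : Submodule ℂ (Idx n → ℂ)) (hiso : IsIsotropic n Λ)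
    (hΛ : Module.finrank ℂ Λ = n) (U C : Set (Idx n)) (hU : ∀ i ∈ U, barI n i ∉ U)
    (hC : ∀ i ∈ C, barI n i ∈ C) (hUC : Disjoint U C) :
    2 * Module.finrank ℂ ↥(Λ ⊓ coordSub n (U ∪ C)) + C.ncard ≤
      2 * Module.finrank ℂ ↥(Λ ⊓ coordSub n U) + 1 := by
  have hCU : ∀ i ∈ C, i ∉ U := fun i hi hi' => Set.disjoint_left.1 hUC hi' hi
  set E := coordSub n (barI n '' U)ᶜ with hE
  set F := coordSub n Cᶜ with hF
  have memE : ∀ v ∈ E, ∀ i, barI n i ∉ U → v i = 0 := by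
    intro v hv i hi
    refine hv i ?_
    rintro ⟨j, hj, rfl⟩
    exact hi (by rwa [barI_barI])
  have cardE : Module.finrank ℂ E = U.ncard := by
    rw [hE, finrank_coordSub, compl_compl]
    exact Set.ncard_image_of_injective _ (Function.Involutive.injective (barI_barI n))
  have cardF : Module.finrank ℂ F = C.ncard := by
    rw [hF, finrank_coordSub, compl_compl]
  have cardHU : Module.finrank ℂ (coordSub n U) + U.ncard = 2 * n + 1 := by
    rw [finrank_coordSub, add_comm]
    exact ncard_add_ncard_compl n U
  have orthEH : ∀ a ∈ E, ∀ b ∈ coordSub n U, bform n a b = 0 := by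
    intro a ha b hb
    refine bform_eq_zero n a b fun i => ?_
    by_cases hi : barI n i ∈ U
    · exact Or.inr (hb _ hi)
    · exact Or.inl (memE a ha i hi)
  have EleHW : E ≤ coordSub n (U ∪ C) := by
    intro v hv i hi
    refine memE v hv i ?_
    rcases hi with hi | hi
    · exact hU i hi
    · exact hCU _ (hC i hi)
  have HWleHU : coordSub n (U ∪ C) ≤ coordSub n U := fun v hv i hi => hv i (Or.inl hi)
  have orthFH : ∀ a ∈ coordSub n (U ∪ C), ∀ b ∈ F, bform n a b = 0 := by
    intro a ha b hb
    refine bform_eq_zero n a b fun i => ?_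
    by_cases hi : i ∈ C
    · exact Or.inl (ha _ (Or.inr hi))
    · refine Or.inr (hb _ fun h => hi ?_)
      simpa [barI_barI] using hC _ h
  have toOrth : ∀ X Y : Submodule ℂ (Idx n → ℂ), (∀ a ∈ X, ∀ b ∈ Y, bform n a b = 0) →
      Y ≤ (bilin n).orthogonal X := fun X Y h b hb a ha => h a ha b hb
  -- a lower bound for `dim (Λ ∩ H_U)`
  have low := finrank_add_le_of_ortho n (Λ ⊓ E) (Λ ⊔ coordSub n U) (by
    have : Λ ⊔ coordSub n U ≤ (bilin n).orthogonal (Λ ⊓ E) :=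
      sup_le (toOrth _ _ fun a ha b hb => hiso a ha.1 b hb)
        (toOrth _ _ fun a ha b hb => orthEH a ha.2 b hb)
    exact fun a ha b hb => this hb a ha)
  have low' := Submodule.finrank_sup_add_finrank_inf_eq Λ (coordSub n U)
  -- an upper bound for `dim (Λ ∩ H_{U ∪ C})`
  set B := Λ ⊓ coordSub n (U ∪ C) with hB
  have hDW : B ⊔ E ≤ coordSub n (U ∪ C) := sup_le inf_le_right EleHW
  have up := finrank_add_le_of_ortho n (B ⊔ E) ((B ⊔ E) ⊔ F) (by
    have hE' : E ≤ (bilin n).orthogonal (B ⊔ E) := toOrth _ _ fun a ha b hb => by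
      rw [bform_comm]
      exact orthEH b hb a (HWleHU (hDW ha))
    have hB' : B ≤ (bilin n).orthogonal (B ⊔ E) := toOrth _ _ fun a ha b hb => by
      rw [bform_comm]
      have : B ⊔ E ≤ (bilin n).orthogonal B :=
        sup_le (toOrth _ _ fun a ha b hb => hiso a ha.1 b hb.1)
          (toOrth _ _ fun a ha b hb => by
            rw [bform_comm]
            exact orthEH b hb a (HWleHU ha.2))
      exact this ha b hb
    have hF' : F ≤ (bilin n).orthogonal (B ⊔ E) :=
      toOrth _ _ fun a ha b hb => orthFH a (hDW ha) b hb
    exact fun a ha b hb => sup_le (sup_le hB' hE') hF' hb a ha)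
  have up' := Submodule.finrank_sup_add_finrank_inf_eq (B ⊔ E) F
  have hDF : (B ⊔ E) ⊓ F = ⊥ := by
    rw [eq_bot_iff]
    intro v hv
    rw [Submodule.mem_bot]
    funext i
    by_cases hi : i ∈ C
    · exact hDW hv.1 i (Or.inr hi)
    · exact hv.2 i hi
  rw [hDF, finrank_bot] at up'
  have up'' := Submodule.finrank_sup_add_finrank_inf_eq B E
  have hBE : B ⊓ E = Λ ⊓ E := by
    rw [hB, inf_assoc, inf_eq_right.2 EleHW]
  rw [hBE] at up''
  omega

/-- Submodularity of `rk_Λ`, in terms of dimensions. -/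
theorem finrank_supermodular (n : ℕ) (Λ : Submodule ℂ (Idx n → ℂ)) (A B : Set (Idx n)) :
    Module.finrank ℂ ↥(Λ ⊓ coordSub n A) + Module.finrank ℂ ↥(Λ ⊓ coordSub n B) ≤
      Module.finrank ℂ ↥(Λ ⊓ coordSub n (A ∩ B)) +
        Module.finrank ℂ ↥(Λ ⊓ coordSub n (A ∪ B)) := by
  rw [← Submodule.finrank_sup_add_finrank_inf_eq]
  have h1 : (Λ ⊓ coordSub n A) ⊔ (Λ ⊓ coordSub n B) ≤ Λ ⊓ coordSub n (A ∩ B) :=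
    sup_le (inf_le_inf_left _ fun v hv i hi => hv i hi.1)
      (inf_le_inf_left _ fun v hv i hi => hv i hi.2)
  have h2 : (Λ ⊓ coordSub n A) ⊓ (Λ ⊓ coordSub n B) ≤ Λ ⊓ coordSub n (A ∪ B) := by
    rintro v ⟨⟨hv, ha⟩, -, hb⟩
    exact ⟨hv, fun i hi => hi.elim (ha i) (hb i)⟩
  exact add_le_add (Submodule.finrank_mono h1) (Submodule.finrank_mono h2)

/-! ### Bisubmodularity -/

/-- The union of the pairs `{q, q̄}` contained in `S ∪ T`. -/
def conflict (n : ℕ) (S T : Finset (Fin n × Bool)) : Finset (Fin n × Bool) :=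
  (S ∪ T).filter (fun p => (p.1, !p.2) ∈ S ∪ T)

theorem sum_sqcup (n : ℕ) (h : Fin n × Bool → ℝ) (S T : Finset (Fin n × Bool)) :
    ∑ p ∈ S ∩ T, h p + ∑ p ∈ sqcup n S T, h p + ∑ p ∈ conflict n S T, h p =
      ∑ p ∈ S, h p + ∑ p ∈ T, h p := by
  rw [← Finset.sum_union_inter (s₁ := S) (s₂ := T),
    ← Finset.sum_filter_add_sum_filter_not (S ∪ T) (fun p => (p.1, !p.2) ∈ S ∪ T)]
  simp only [sqcup, conflict]
  ring

theorem sum_conflict_bar (n : ℕ) (h : Fin n × Bool → ℝ) (S T : Finset (Fin n × Bool)) :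
    ∑ p ∈ conflict n S T, h (p.1, !p.2) = ∑ p ∈ conflict n S T, h p := by
  refine Finset.sum_nbij' (fun p => (p.1, !p.2)) (fun p => (p.1, !p.2)) ?_ ?_ ?_ ?_ ?_ <;>
    simp +contextual [conflict]

/-- The summand of `x(S)` at `p`: it is `x_q` for `p = q` and `-x_q` for `p = q̄`. -/
def wt (n : ℕ) (x : Fin n → ℝ) (p : Fin n × Bool) : ℝ := if p.2 = true then -x p.1 else x p.1

theorem xval_eq_sum (n : ℕ) (x : Fin n → ℝ) (S : Finset (Fin n × Bool)) :
    xval n x S = ∑ p ∈ S, wt n x p := by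
  rw [xval, ← Finset.sum_filter_add_sum_filter_not S (fun p => p.2 = true), Finset.sum_congr rfl
    (fun p hp => (by simp [wt, (Finset.mem_filter.1 hp).2] : wt n x p = -x p.1)),
    Finset.sum_neg_distrib]
  simp only [Bool.not_eq_true]
  rw [Finset.sum_congr rfl (g := fun p => x p.1) (s₁ := S.filter fun p => p.2 = false)
    (f := fun p => wt n x p) (fun p hp => by simp [wt, (Finset.mem_filter.1 hp).2])]
  ring

theorem xval_sqcup (n : ℕ) (x : Fin n → ℝ) (S T : Finset (Fin n × Bool)) :
    xval n x (S ∩ T) + xval n x (sqcup n S T) = xval n x S + xval n x T := by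
  simp only [xval_eq_sum]
  have h1 := sum_sqcup n (wt n x) S T
  have h2 := sum_conflict_bar n (wt n x) S T
  have h3 : ∀ p, wt n x (p.1, !p.2) = -wt n x p := by
    rintro ⟨q, b | b⟩ <;> simp [wt]
  simp only [h3, Finset.sum_neg_distrib] at h2
  linarith

theorem xval_add_smul (n : ℕ) (x d : Fin n → ℝ) (c : ℝ) (S : Finset (Fin n × Bool)) :
    xval n (x + c • d) S = xval n x S + c * xval n d S := by
  simp only [xval_eq_sum, Finset.mul_sum, ← Finset.sum_add_distrib]
  refine Finset.sum_congr rfl fun p _ => ?_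
  simp only [wt, Pi.add_apply, Pi.smul_apply, smul_eq_mul]
  split_ifs <;> ring

theorem admissible_bar {n : ℕ} {S : Finset (Fin n × Bool)} (hS : Admissible n S)
    {q : Fin n} {b : Bool} (h : (q, b) ∈ S) : (q, !b) ∉ S := by
  intro h'
  cases b
  · exact hS q ⟨h, h'⟩
  · exact hS q ⟨h', h⟩

theorem admissible_mono {n : ℕ} {S T : Finset (Fin n × Bool)} (hT : Admissible n T)
    (h : S ⊆ T) : Admissible n S := fun q hq => hT q ⟨h hq.1, h hq.2⟩

theorem admissible_sqcup (n : ℕ) (S T : Finset (Fin n × Bool)) :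
    Admissible n (sqcup n S T) := by
  rintro q ⟨h1, h2⟩
  simp only [sqcup, Finset.mem_filter] at h1 h2
  exact h1.2 h2.1

theorem gF_eq (n : ℕ) (Λ : Submodule ℂ (Idx n → ℂ)) (hΛ : Module.finrank ℂ Λ = n)
    (S : Finset (Fin n × Bool)) :
    (gF n Λ S : ℝ) = n - Module.finrank ℂ ↥(Λ ⊓ coordSub n (finIdx n S)) -
      ∑ p ∈ S, (if p.2 = true then (1 : ℝ) else 0) := by
  have h : Module.finrank ℂ ↥(Λ ⊓ coordSub n (finIdx n S)) ≤ n := by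
    conv_rhs => rw [← hΛ]
    exact Submodule.finrank_mono inf_le_left
  simp [gF, rkF, rk, Nat.cast_sub h]

theorem gF_bisubmodular (n : ℕ) (Λ : Submodule ℂ (Idx n → ℂ)) (hiso : IsIsotropic n Λ)
    (hΛ : Module.finrank ℂ Λ = n) (S T : Finset (Fin n × Bool)) :
    (gF n Λ (S ∩ T) : ℝ) + gF n Λ (sqcup n S T) ≤ gF n Λ S + gF n Λ T := by
  simp only [gF_eq n Λ hΛ]
  set b : Fin n × Bool → ℝ := fun p => if p.2 = true then (1 : ℝ) else 0 with hb
  have hsum := sum_sqcup n b S T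
  have hbar := sum_conflict_bar n b S T
  have hcard : ∑ p ∈ conflict n S T, b (p.1, !p.2) + ∑ p ∈ conflict n S T, b p =
      (conflict n S T).card := by
    rw [← Finset.sum_add_distrib, Finset.card_eq_sum_ones, Nat.cast_sum]
    refine Finset.sum_congr rfl ?_
    rintro ⟨q, c | c⟩ _ <;> simp [hb]
  -- the number `k` of pairs, which shows that `|C| = 2 k` is even
  obtain ⟨k, hk⟩ : ∃ k : ℕ, ∑ p ∈ conflict n S T, b p = k :=
    ⟨((conflict n S T).filter fun p => p.2 = true).card, by simp [hb]⟩
  have hcard2 : (conflict n S T).card = 2 * k := by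
    have : ((conflict n S T).card : ℝ) = 2 * k := by linarith
    exact_mod_cast this
  have hinj : Function.Injective (fun p => (some p : Idx n)) := Option.some_injective _
  have hint : finIdx n (S ∩ T) = finIdx n S ∩ finIdx n T := by
    simp only [finIdx, Finset.coe_inter]
    exact Set.image_inter hinj
  have hunion : finIdx n S ∪ finIdx n T = finIdx n (sqcup n S T) ∪ finIdx n (conflict n S T) := by
    simp only [finIdx, ← Set.image_union, ← Finset.coe_union]
    congr 2
    ext p
    simp only [sqcup, conflict, Finset.mem_union, Finset.mem_filter]
    tauto
  have hsup := finrank_supermodular n Λ (finIdx n S) (finIdx n T)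
  rw [← hint, hunion] at hsup
  have hkey := two_mul_finrank_add_le n Λ hiso hΛ (finIdx n (sqcup n S T))
    (finIdx n (conflict n S T))
    (by
      rintro _ ⟨⟨q, c⟩, hq, rfl⟩ ⟨p, hp, hpq⟩
      obtain rfl : p = (q, !c) := by simpa [barI] using hpq
      exact admissible_bar (admissible_sqcup n S T) hq hp)
    (by
      rintro _ ⟨⟨q, c⟩, hq, rfl⟩
      refine ⟨(q, !c), ?_, rfl⟩
      simp only [conflict, Finset.coe_filter, Set.mem_ofPred_eq, Bool.not_not] at hq ⊢
      exact ⟨hq.2, hq.1⟩)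
    (by
      rw [finIdx, finIdx, Set.disjoint_image_iff hinj, Finset.disjoint_coe, Finset.disjoint_left]
      intro p hp hp'
      exact (Finset.mem_filter.1 hp).2 (Finset.mem_filter.1 hp').2)
  have hnc : (finIdx n (conflict n S T)).ncard = 2 * k := by
    rw [finIdx, Set.ncard_image_of_injective _ hinj, Set.ncard_coe_finset, hcard2]
  rw [hnc] at hkey
  have hfin : Module.finrank ℂ ↥(Λ ⊓ coordSub n (finIdx n S)) +
      Module.finrank ℂ ↥(Λ ⊓ coordSub n (finIdx n T)) + k ≤
      Module.finrank ℂ ↥(Λ ⊓ coordSub n (finIdx n (S ∩ T))) +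
      Module.finrank ℂ ↥(Λ ⊓ coordSub n (finIdx n (sqcup n S T))) := by omega
  have hfin' : (Module.finrank ℂ ↥(Λ ⊓ coordSub n (finIdx n S)) : ℝ) +
      Module.finrank ℂ ↥(Λ ⊓ coordSub n (finIdx n T)) + k ≤
      Module.finrank ℂ ↥(Λ ⊓ coordSub n (finIdx n (S ∩ T))) +
      Module.finrank ℂ ↥(Λ ⊓ coordSub n (finIdx n (sqcup n S T))) := by exact_mod_cast hfin
  linarith

/-! ### Tight sets -/

/-- An admissible set whose inequality holds with equality at `x`. -/
def Tight (n : ℕ) (Λ : Submodule ℂ (Idx n → ℂ)) (x : Fin n → ℝ) (S : Finset (Fin n × Bool)) :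
    Prop :=
  Admissible n S ∧ xval n x S = (gF n Λ S : ℝ)

theorem tight_inter_sqcup {n : ℕ} {Λ : Submodule ℂ (Idx n → ℂ)} (hiso : IsIsotropic n Λ)
    (hΛ : Module.finrank ℂ Λ = n) {x : Fin n → ℝ} (hx : x ∈ polytopeP n Λ)
    {S T : Finset (Fin n × Bool)} (hS : Tight n Λ x S) (hT : Tight n Λ x T) :
    Tight n Λ x (S ∩ T) ∧ Tight n Λ x (sqcup n S T) := by
  have a1 : Admissible n (S ∩ T) := admissible_mono hS.1 Finset.inter_subset_left
  have a2 := admissible_sqcup n S T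
  have h1 := hx _ a1
  have h2 := hx _ a2
  have h3 := gF_bisubmodular n Λ hiso hΛ S T
  have h4 := xval_sqcup n x S T
  have h5 := hS.2
  have h6 := hT.2
  exact ⟨⟨a1, by linarith⟩, ⟨a2, by linarith⟩⟩

theorem sqcup_eq_union {n : ℕ} {S T : Finset (Fin n × Bool)} (h : Admissible n (S ∪ T)) :
    sqcup n S T = S ∪ T :=
  Finset.filter_true_of_mem fun _ hp => admissible_bar h hp

theorem tight_empty {n : ℕ} {Λ : Submodule ℂ (Idx n → ℂ)}
    (hΛ : Module.finrank ℂ Λ = n) (x : Fin n → ℝ) : Tight n Λ x ∅ := by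
  refine ⟨fun q => by simp, ?_⟩
  have : Λ ⊓ coordSub n (finIdx n ∅) = Λ :=
    inf_eq_left.2 fun v _ i hi => by simp [finIdx] at hi
  rw [gF_eq n Λ hΛ, this, hΛ]
  simp [xval]

/-- A direction annihilated by all tight constraints can be followed both ways for a short time
inside the polytope, so it vanishes at an extreme point. -/
theorem direction_eq_zero {n : ℕ} {Λ : Submodule ℂ (Idx n → ℂ)} {x : Fin n → ℝ}
    (hx : x ∈ Set.extremePoints ℝ (polytopeP n Λ)) (d : Fin n → ℝ)
    (hd : ∀ S, Tight n Λ x S → xval n d S = 0) : d = 0 := by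
  have hev : ∀ᶠ ε : ℝ in nhds 0, ∀ S : Finset (Fin n × Bool), Admissible n S →
      xval n (x + ε • d) S ≤ gF n Λ S := by
    rw [Filter.eventually_all]
    intro S
    by_cases hS : Admissible n S
    · by_cases ht : xval n x S = gF n Λ S
      · refine Filter.Eventually.of_forall fun ε _ => ?_
        rw [xval_add_smul, hd S ⟨hS, ht⟩, ht]
        simp
      · have hlt := lt_of_le_of_ne (hx.1 S hS) ht
        have hc : Continuous fun ε : ℝ => xval n x S + ε * xval n d S := by fun_prop
        have := hc.tendsto 0
        simp only [zero_mul, add_zero] at this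
        filter_upwards [this.eventually (gt_mem_nhds hlt)] with ε hε _
        rw [xval_add_smul]
        exact hε.le
    · exact Filter.Eventually.of_forall fun ε h => absurd h hS
  obtain ⟨δ, hδ, hball⟩ := Metric.eventually_nhds_iff.1 hev
  have hp : x + (δ / 2) • d ∈ polytopeP n Λ := hball (by
    rw [Real.dist_eq, sub_zero, abs_of_pos] <;> linarith)
  have hm : x + (-(δ / 2)) • d ∈ polytopeP n Λ := hball (by
    rw [Real.dist_eq, sub_zero, abs_neg, abs_of_pos] <;> linarith)
  have hseg : x ∈ openSegment ℝ (x + (δ / 2) • d) (x + (-(δ / 2)) • d) := by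
    refine ⟨1 / 2, 1 / 2, by norm_num, by norm_num, by norm_num, ?_⟩
    funext q
    simp
    ring
  have := hx.2 hp hm hseg
  have h0 : (δ / 2) • d = 0 := by simpa using this
  exact (smul_eq_zero.1 h0).resolve_left (by linarith)

/-- There is a tight set meeting every pair `{q, q̄}`. -/
theorem exists_full_tight {n : ℕ} {Λ : Submodule ℂ (Idx n → ℂ)} (hiso : IsIsotropic n Λ)
    (hΛ : Module.finrank ℂ Λ = n) {x : Fin n → ℝ}
    (hx : x ∈ Set.extremePoints ℝ (polytopeP n Λ)) :
    ∃ T, Tight n Λ x T ∧ ∀ q, ∃ b, (q, b) ∈ T := by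
  classical
  obtain ⟨T, hT, hmax⟩ := Finset.exists_max_image
    (Finset.univ.filter fun T => Tight n Λ x T) Finset.card
    ⟨∅, by simpa using tight_empty hΛ x⟩
  simp only [Finset.mem_filter, Finset.mem_univ, true_and] at hT hmax
  refine ⟨T, hT, ?_⟩
  by_contra! hq
  obtain ⟨q, hq⟩ := hq
  have hd := direction_eq_zero hx (Pi.single q 1) (by
    intro S hS
    rw [xval_eq_sum]
    refine Finset.sum_eq_zero ?_
    rintro ⟨r, b⟩ hr
    by_cases hrq : r = q
    · subst hrq
      exfalso
      have h1 := (tight_inter_sqcup hiso hΛ hx.1 hS hT).2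
      have h2 := (tight_inter_sqcup hiso hΛ hx.1 hT h1).2
      -- `T ⊔ (S ⊔ T)` contains `T` and the element `(r, b)` outside the support of `T`
      have hsub : insert (r, b) T ⊆ sqcup n T (sqcup n S T) := by
        have hbS := admissible_bar hS.1 hr
        intro p hp
        rcases Finset.mem_insert.1 hp with rfl | hp
        · simp [sqcup, hr, hbS, hq]
        · have := admissible_bar hT.1 (q := p.1) (b := p.2) hp
          simp [sqcup, hp, this]
      have h3 := Finset.card_le_card hsub
      rw [Finset.card_insert_of_notMem (hq b)] at h3
      have := hmax _ h2
      omega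
    · simp [wt, hrq])
  have := congrFun hd q
  simp at this

theorem card_of_full {n : ℕ} {T : Finset (Fin n × Bool)} (hT : Admissible n T)
    (hfull : ∀ q, ∃ b, (q, b) ∈ T) : T.card = n := by
  have : T.card = (Finset.univ : Finset (Fin n)).card := by
    refine Finset.card_nbij Prod.fst (fun _ _ => Finset.mem_univ _) ?_ ?_
    · rintro ⟨q, b⟩ hb ⟨r, c⟩ hc (rfl : q = r)
      by_contra hne
      have : c = !b := by
        cases b <;> cases c <;> simp_all
      subst this
      exact admissible_bar hT hb hc
    · intro q _
      obtain ⟨b, hb⟩ := hfull q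
      exact ⟨(q, b), hb, rfl⟩
  simpa using this

/-- The tight subsets of a tight set of full support separate its points. -/
theorem exists_separating {n : ℕ} {Λ : Submodule ℂ (Idx n → ℂ)} (hiso : IsIsotropic n Λ)
    (hΛ : Module.finrank ℂ Λ = n) {x : Fin n → ℝ}
    (hx : x ∈ Set.extremePoints ℝ (polytopeP n Λ)) {T : Finset (Fin n × Bool)}
    (hT : Tight n Λ x T) (hfull : ∀ q, ∃ b, (q, b) ∈ T) {p q : Fin n × Bool} (hp : p ∈ T)
    (hpq : p ≠ q) : ∃ S, Tight n Λ x S ∧ S ⊆ T ∧ ¬(p ∈ S ↔ q ∈ S) := by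
  by_contra! hno
  -- the direction whose signed coordinates along `T` are `1` at `p`, `-1` at `q`, and `0` elsewhere
  set φ : Fin n × Bool → ℝ := Pi.single p 1 - Pi.single q 1 with hφ
  set d : Fin n → ℝ := fun r => if (r, false) ∈ T then φ (r, false) else -φ (r, true) with hd
  have hw : ∀ s ∈ T, wt n d s = φ s := by
    rintro ⟨r, b | b⟩ hs
    · simp [wt, hd, hs]
    · have := admissible_bar hT.1 hs
      simp only [Bool.not_true] at this
      simp [wt, hd, this]
  have hsub : ∀ S, Tight n Λ x S → S ⊆ T → xval n d S = 0 := by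
    intro S hS hST
    rw [xval_eq_sum, Finset.sum_congr rfl fun s hs => hw s (hST hs)]
    have := hno S hS hST
    simp [hφ, Pi.single_apply, Finset.sum_sub_distrib, this]
  have hall : d = 0 := direction_eq_zero hx d fun S hS => by
    obtain ⟨h1, h2⟩ := tight_inter_sqcup hiso hΛ hx.1 hS hT
    have h3 := xval_sqcup n d S T
    -- `S ⊔ T ⊆ T` because `T` has full support
    have h4 : sqcup n S T ⊆ T := by
      rintro ⟨r, b⟩ hr
      simp only [sqcup, Finset.mem_filter, Finset.mem_union, not_or] at hr
      obtain ⟨c, hc⟩ := hfull r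
      by_cases hcb : c = b
      · rwa [← hcb]
      · have : c = !b := by
          cases b <;> cases c <;> simp_all
        subst this
        exact absurd hc hr.2.2
    rw [hsub _ h1 Finset.inter_subset_right, hsub _ h2 h4, hsub _ hT subset_rfl] at h3
    linarith
  have h1 := hw p hp
  rw [hall] at h1
  simp [wt, hφ, hpq] at h1

/-- For a tight set `T` of full support, a tight proper subset of `T` can be enlarged by one
element to another tight subset. -/
theorem exists_step {n : ℕ} {Λ : Submodule ℂ (Idx n → ℂ)} (hiso : IsIsotropic n Λ)
    (hΛ : Module.finrank ℂ Λ = n) {x : Fin n → ℝ}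
    (hx : x ∈ Set.extremePoints ℝ (polytopeP n Λ)) {T : Finset (Fin n × Bool)}
    (hT : Tight n Λ x T) (hfull : ∀ q, ∃ b, (q, b) ∈ T) {A : Finset (Fin n × Bool)}
    (hA : Tight n Λ x A) (hAT : A ⊂ T) :
    ∃ B, Tight n Λ x B ∧ A ⊆ B ∧ B ⊆ T ∧ B.card = A.card + 1 := by
  classical
  obtain ⟨B, hB, hmin⟩ := Finset.exists_min_image
    (Finset.univ.filter fun B => Tight n Λ x B ∧ A ⊂ B ∧ B ⊆ T) Finset.card
    ⟨T, by simpa using ⟨hT, hAT⟩⟩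
  simp only [Finset.mem_filter, Finset.mem_univ, true_and] at hB hmin
  obtain ⟨hBt, hAB, hBT⟩ := hB
  refine ⟨B, hBt, hAB.1, hBT, ?_⟩
  by_contra hcard
  have h1 := Finset.card_lt_card hAB
  have h2 := Finset.card_sdiff_add_card_eq_card hAB.1
  obtain ⟨p, hp, q, hq, hpq⟩ := Finset.one_lt_card.1 (by omega : 1 < (B \ A).card)
  rw [Finset.mem_sdiff] at hp hq
  -- a tight set containing one point of `B \ A` but not another gives a tight set
  -- strictly between `A` and `B`
  have key : ∀ p q, p ∈ B → p ∉ A → q ∈ B → q ∉ A → ∀ S, Tight n Λ x S → p ∈ S → q ∉ S →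
      False := by
    intro p q hpB hpA hqB hqA S hS hpS hqS
    have h3 := (tight_inter_sqcup hiso hΛ hx.1 hS hBt).1
    have hsub : A ∪ S ∩ B ⊆ B := Finset.union_subset hAB.1 Finset.inter_subset_right
    have h4 := (tight_inter_sqcup hiso hΛ hx.1 hA h3).2
    rw [sqcup_eq_union (admissible_mono hBt.1 hsub)] at h4
    have h5 : A ⊂ A ∪ S ∩ B := Finset.ssubset_iff_subset_ne.2
      ⟨Finset.subset_union_left, fun h => hpA (by rw [h]; simp [hpB, hpS])⟩
    have h6 : A ∪ S ∩ B ⊂ B := Finset.ssubset_iff_subset_ne.2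
      ⟨hsub, fun h => by
        rw [← h] at hqB
        simp [hqA, hqS] at hqB⟩
    have h7 := hmin _ ⟨h4, h5, hsub.trans hBT⟩
    have h8 := Finset.card_lt_card h6
    omega
  obtain ⟨S, hS, -, hsep⟩ := exists_separating hiso hΛ hx hT hfull (hBT hp.1) hpq
  by_cases hpS : p ∈ S
  · exact key p q hp.1 hp.2 hq.1 hq.2 S hS hpS (by tauto)
  · exact key q p hq.1 hq.2 hp.1 hp.2 S hS (by tauto) hpS

theorem stmt10 (n : ℕ) (hn : 2 ≤ n)
    (Λ : Submodule ℂ (Idx n → ℂ)) (hiso : IsIsotropic n Λ)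
    (hΛ : Module.finrank ℂ ↥Λ = n)
    (x : Fin n → ℝ) (hx : x ∈ Set.extremePoints ℝ (polytopeP n Λ)) :
    ∃ S : Fin n → Finset (Fin n × Bool), StrictMono S ∧
      (∀ j, Admissible n (S j)) ∧ (∀ j, (S j).card = (j : ℕ) + 1) ∧
      (∀ j, xval n x (S j) = (gF n Λ (S j) : ℝ)) := by
  classical
  obtain ⟨T, hT, hfull⟩ := exists_full_tight hiso hΛ hx
  have hTcard := card_of_full hT.1 hfull
  have hstep : ∀ A : Finset (Fin n × Bool), ∃ B, Tight n Λ x A → A ⊂ T →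
      Tight n Λ x B ∧ A ⊆ B ∧ B ⊆ T ∧ B.card = A.card + 1 := by
    intro A
    by_cases h : Tight n Λ x A ∧ A ⊂ T
    · obtain ⟨B, hB⟩ := exists_step hiso hΛ hx hT hfull h.1 h.2
      exact ⟨B, fun _ _ => hB⟩
    · exact ⟨∅, fun h1 h2 => absurd ⟨h1, h2⟩ h⟩
  choose next hnext using hstep
  have hc : ∀ k, k ≤ n → Tight n Λ x (next^[k] ∅) ∧ next^[k] ∅ ⊆ T ∧ (next^[k] ∅).card = k := by
    intro k
    induction k with
    | zero => exact fun _ => ⟨tight_empty hΛ x, by simp, by simp⟩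
    | succ k ih =>
      intro hk
      obtain ⟨h1, h2, h3⟩ := ih (by omega)
      have h4 := hnext _ h1 (Finset.ssubset_iff_subset_ne.2 ⟨h2, fun h => by
        rw [h] at h3
        omega⟩)
      rw [Function.iterate_succ_apply']
      exact ⟨h4.1, h4.2.2.1, by rw [h4.2.2.2, h3]⟩
  have hmono : ∀ i j, i ≤ j → j ≤ n → next^[i] ∅ ⊆ next^[j] ∅ := by
    intro i j hij
    induction j, hij using Nat.le_induction with
    | base => exact fun _ => subset_rfl
    | succ j hij ih =>
      intro hj
      obtain ⟨h1, h2, h3⟩ := hc j (by omega)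
      have h4 := hnext _ h1 (Finset.ssubset_iff_subset_ne.2 ⟨h2, fun h => by
        rw [h] at h3
        omega⟩)
      rw [Function.iterate_succ_apply']
      exact (ih (by omega)).trans h4.2.1
  refine ⟨fun j => next^[(j : ℕ) + 1] ∅, ?_, fun j => (hc _ j.2).1.1, fun j => (hc _ j.2).2.2,
    fun j => (hc _ j.2).1.2⟩
  intro i j hij
  have hij' : (i : ℕ) < j := hij
  refine Finset.ssubset_iff_subset_ne.2 ⟨hmono _ _ (by omega) j.2, fun h => ?_⟩
  have h1 := (hc _ i.2).2.2
  have h2 := (hc _ j.2).2.2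
  simp only [Nat.succ_eq_add_one] at h h1 h2
  rw [h, h2] at h1
  omega
end
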